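/- Let P be a c-packed polygonal curve in ℝ^d all of whose edges have length at least ℓ > 0. Then for every point q ∈ ℝ^d and every R > 0, the number of edges of P that intersect the closed ball B(q,R) is at most c·(R+ℓ)/ℓ. -/

import Mathlib

open scoped BigOperators

noncomputable section

/-- Points of `d`-dimensional Euclidean space. -/
abbrev Pt (d : ℕ) := EuclideanSpace ℝ (Fin d)

/-- A reparametrization: a continuous nondecreasing surjection of `[0,1]` onto itself
(equivalently, continuous and monotone on `[0,1]` with `α 0 = 0` and `α 1 = 1`). -/
structure IsReparam (α : ℝ → ℝ) : Prop where
  continuousOn : ContinuousOn α (Set.Icc 0 1)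
  monotoneOn : MonotoneOn α (Set.Icc 0 1)
  map_zero : α 0 = 0
  map_one : α 1 = 1

/-- The Fréchet distance between two curves parametrized over `[0,1]`. -/
noncomputable def frechetDist {d : ℕ} (P Q : ℝ → Pt d) : ℝ :=
  sInf {r : ℝ | ∃ α β : ℝ → ℝ, IsReparam α ∧ IsReparam β ∧
    r = ⨆ t : Set.Icc (0:ℝ) 1, dist (P (α (t : ℝ))) (Q (β (t : ℝ)))}

/-- The straight-line curve from `a` to `b`, parametrized over `[0,1]`. -/
def seg {d : ℕ} (a b : Pt d) : ℝ → Pt d := fun t => (1 - t) • a + t • b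

/-- The subcurve `K|[s,t]`, reparametrized over `[0,1]`. -/
def subcurve {d : ℕ} (K : ℝ → Pt d) (s t : ℝ) : ℝ → Pt d := fun u => K (s + u * (t - s))

/-- `K` is affine-linear on `[a,b]` (constant if `a = b`, by `div_zero`). -/
def AffineOn {d : ℕ} (K : ℝ → Pt d) (a b : ℝ) : Prop :=
  ∀ x ∈ Set.Icc a b, K x = K a + ((x - a) / (b - a)) • (K b - K a)

/-- Concatenation of two curves parametrized over `[0,1]`. -/
noncomputable def concat {d : ℕ} (A B : ℝ → Pt d) : ℝ → Pt d :=
  fun t => if t ≤ 1 / 2 then A (2 * t) else B (2 * t - 1)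

/-- The point at parameter `t ∈ [0,1]` on the segment with endpoints `e.1`, `e.2`. -/
def interpEdge {d : ℕ} (e : Pt d × Pt d) (t : ℝ) : Pt d := (1 - t) • e.1 + t • e.2

/-- The edges of a polygonal curve given by its list of vertices. -/
def edgesOf {d : ℕ} (l : List (Pt d)) : List (Pt d × Pt d) := l.zip l.tail

/-- The length of the part of segment `e` inside the closed ball `B(q,r)`. -/
noncomputable def segBallLength {d : ℕ} (e : Pt d × Pt d) (q : Pt d) (r : ℝ) : ℝ :=
  (MeasureTheory.volume
      {t : ℝ | t ∈ Set.Icc (0:ℝ) 1 ∧ interpEdge e t ∈ Metric.closedBall q r}).toReal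
    * dist e.1 e.2

/-- A polygonal curve with vertex list `l` is `c`-packed: for every point `q` and radius
`r > 0`, the total length of the curve inside `B(q,r)` is at most `c * r`. -/
def CPacked {d : ℕ} (c : ℝ) (l : List (Pt d)) : Prop :=
  ∀ (q : Pt d) (r : ℝ), 0 < r →
    ((edgesOf l).map (fun e => segBallLength e q r)).sum ≤ c * r

/-- Greedy scan step of the simplification: starting from the current vertex `cur`, mark
the first vertex at distance at least `μ` from `cur` and continue from it. -/
noncomputable def greedyScan {d : ℕ} (μ : ℝ) : Pt d → List (Pt d) → List (Pt d)
  | _, [] => []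
  | cur, p :: rest =>
      if μ ≤ dist cur p then p :: greedyScan μ p rest else greedyScan μ cur rest

open Classical in
/-- The greedy `μ`-simplification of a polygonal curve given by its vertex list: mark the
first vertex, greedily scan forward, and always mark the last vertex. -/
noncomputable def simplList {d : ℕ} (μ : ℝ) : List (Pt d) → List (Pt d)
  | [] => []
  | p :: rest =>
      let s := p :: greedyScan μ p rest
      match rest.getLast? with
      | none => s
      | some last => if s.getLast? = some last then s else s ++ [last]

/-- `P : [0,1] → ℝ^d` is the polygonal curve through the vertex list `l`, with the uniform
parametrization placing vertex `i` at parameter `i / (|l| - 1)`. -/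
def IsPolygonalParamL {d : ℕ} (l : List (Pt d)) (P : ℝ → Pt d) : Prop :=
  (∀ i, i < l.length → P ((i : ℝ) / ((l.length : ℝ) - 1)) = l.getD i 0) ∧
  ∀ i, i + 1 < l.length →
    AffineOn P ((i : ℝ) / ((l.length : ℝ) - 1)) (((i : ℝ) + 1) / ((l.length : ℝ) - 1))

/-- `Q : [0,1] → ℝ^d` is the polygonal curve with vertices `q 0, …, q (m-1)`, with the
uniform parametrization placing vertex `i` at parameter `i / (m - 1)`. -/
def IsPolygonalParam {d : ℕ} (m : ℕ) (q : ℕ → Pt d) (Q : ℝ → Pt d) : Prop :=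
  (∀ i, i < m → Q ((i : ℝ) / ((m : ℝ) - 1)) = q i) ∧
  ∀ i, i + 1 < m →
    AffineOn Q ((i : ℝ) / ((m : ℝ) - 1)) (((i : ℝ) + 1) / ((m : ℝ) - 1))

/-- The Euclidean distance from a point `x` to the segment `e`. -/
noncomputable def segDist {d : ℕ} (e : Pt d × Pt d) (x : Pt d) : ℝ :=
  sInf {r : ℝ | ∃ t ∈ Set.Icc (0:ℝ) 1, r = dist x (interpEdge e t)}

/-- The trough object of an edge `e`, a subset of `ℝ^d × ℝ`. -/
def trough {d : ℕ} (e : Pt d × Pt d) (δ : ℝ) : Set (Pt d × ℝ) :=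
  {p | segDist e p.1 ≤ 4 * p.2 ∧ 4 * p.2 ≤ 8 * δ⁻¹ * dist e.1 e.2}

/-- The axis-parallel hypercube in `ℝ^d × ℝ` with lower corner `(a, b)` and side length `s`. -/
def cube {d : ℕ} (a : Pt d) (b s : ℝ) : Set (Pt d × ℝ) :=
  {p | (∀ i, p.1 i ∈ Set.Icc (a i) (a i + s)) ∧ p.2 ∈ Set.Icc b (b + s)}

end
theorem interpEdge_dist {d : ℕ} (e : Pt d × Pt d) (s t : ℝ) :
    dist (interpEdge e s) (interpEdge e t) = |s - t| * dist e.1 e.2 := by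
  have h : interpEdge e s - interpEdge e t = (s - t) • (e.2 - e.1) := by
    unfold interpEdge
    module
  rw [dist_eq_norm, h, norm_smul, Real.norm_eq_abs, dist_comm e.1 e.2, dist_eq_norm]

theorem segBallLength_nonneg {d : ℕ} (e : Pt d × Pt d) (q : Pt d) (r : ℝ) :
    0 ≤ segBallLength e q r := mul_nonneg ENNReal.toReal_nonneg dist_nonneg

theorem le_segBallLength {d : ℕ} (e : Pt d × Pt d) (q : Pt d) (R ℓ : ℝ) (hℓ : 0 < ℓ)
    (he : ℓ ≤ dist e.1 e.2) (t₀ : ℝ) (ht : t₀ ∈ Set.Icc (0:ℝ) 1)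
    (hb : interpEdge e t₀ ∈ Metric.closedBall q R) :
    ℓ ≤ segBallLength e q (R + ℓ) := by
  have hL : 0 < dist e.1 e.2 := hℓ.trans_le he
  obtain ⟨s, hs⟩ : ∃ s, s = ℓ / dist e.1 e.2 := ⟨_, rfl⟩
  have hsL : s * dist e.1 e.2 = ℓ := by rw [hs]; field_simp
  have hs0 : 0 < s := by rw [hs]; positivity
  have hs1 : s ≤ 1 := by rw [hs]; exact (div_le_one hL).2 he
  obtain ⟨a, ha0, ha1, ha2, ha3⟩ : ∃ a : ℝ, 0 ≤ a ∧ a + s ≤ 1 ∧ t₀ - s ≤ a ∧ a ≤ t₀ := by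
    rcases le_total s t₀ with h | h
    · exact ⟨t₀ - s, by linarith, by linarith [ht.2], le_refl _, by linarith⟩
    · exact ⟨0, le_refl _, by linarith, by linarith, ht.1⟩
  have hsub : Set.Icc a (a + s) ⊆
      {t : ℝ | t ∈ Set.Icc (0:ℝ) 1 ∧ interpEdge e t ∈ Metric.closedBall q (R + ℓ)} := by
    intro t htt
    refine ⟨⟨ha0.trans htt.1, htt.2.trans ha1⟩, ?_⟩
    rw [Metric.mem_closedBall] at hb ⊢
    have h1 := dist_triangle (interpEdge e t) (interpEdge e t₀) q
    rw [interpEdge_dist] at h1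
    have h2 : |t - t₀| ≤ s := abs_le.2 ⟨by linarith [htt.1], by linarith [htt.2]⟩
    have h3 := mul_le_mul_of_nonneg_right h2 hL.le
    linarith
  have hfin : MeasureTheory.volume
      {t : ℝ | t ∈ Set.Icc (0:ℝ) 1 ∧ interpEdge e t ∈ Metric.closedBall q (R + ℓ)} ≠ ⊤ := by
    refine ne_top_of_le_ne_top (b := MeasureTheory.volume (Set.Icc (0:ℝ) 1)) (by simp) ?_
    exact MeasureTheory.measure_mono fun t h => h.1
  have hm := ENNReal.toReal_mono hfin (MeasureTheory.measure_mono hsub)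
  rw [Real.volume_Icc, ENNReal.toReal_ofReal (by linarith)] at hm
  unfold segBallLength
  calc ℓ = s * dist e.1 e.2 := hsL.symm
    _ ≤ _ := mul_le_mul_of_nonneg_right (by linarith) hL.le

theorem sum_map_eq_range {α : Type*} (L : List α) (x : α) (f : α → ℝ) :
    (L.map f).sum = ∑ i ∈ Finset.range L.length, f (L.getD i x) := by
  induction L with
  | nil => simp
  | cons a L ih => simp [Finset.sum_range_succ', ih, add_comm]

open Classical in
/-- Let `P` be a `c`-packed polygonal curve in `ℝ^d` all of whose edges have
length at least `ℓ > 0`. Then for every point `q` and every `R > 0`, the number of edges of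
`P` intersecting the closed ball `B(q,R)` is at most `c (R + ℓ) / ℓ`. -/
theorem packed_edge_count {d : ℕ} (c ℓ : ℝ) (hℓ : 0 < ℓ)
    (l : List (Pt d)) (hpack : CPacked c l)
    (hedges : ∀ e ∈ edgesOf l, ℓ ≤ dist e.1 e.2)
    (q : Pt d) (R : ℝ) (hR : 0 < R) :
    (((Finset.range (edgesOf l).length).filter (fun i =>
          ∃ t ∈ Set.Icc (0:ℝ) 1,
            interpEdge ((edgesOf l).getD i (0, 0)) t ∈ Metric.closedBall q R)).card : ℝ)
      ≤ c * (R + ℓ) / ℓ := by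
  rw [le_div_iff₀ hℓ]
  refine le_trans ?_ (hpack q (R + ℓ) (by linarith))
  rw [sum_map_eq_range _ (0, 0), ← nsmul_eq_mul]
  refine le_trans (Finset.card_nsmul_le_sum _
    (fun i => segBallLength ((edgesOf l).getD i (0, 0)) q (R + ℓ)) ℓ ?_)
    (Finset.sum_le_sum_of_subset_of_nonneg (Finset.filter_subset _ _)
      fun i _ _ => segBallLength_nonneg _ _ _)
  intro i hi
  obtain ⟨hi, t, ht, hb⟩ := Finset.mem_filter.1 hi
  refine le_segBallLength _ q R ℓ hℓ (hedges _ ?_) t ht hb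
  rw [List.getD_eq_getElem _ _ (Finset.mem_range.1 hi)]
  exact List.getElem_mem _
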